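/- Let q₀ be a positive real number, let C > 0, and let μ ∈ ℂ with Re μ > 0. Assume θ₂(iν) ≠ 0, θ₃(iν) ≠ 0 and θ₄(iν) ≠ 0 for every ν with Re ν > 0. Then ã₀[q₀](iμ+1) = ã₀[q₀−i](iμ) and ã₀[q₀](i/μ) = −q₀⁴ μ² ã₀[1/q₀](iμ). -/

import Mathlib

noncomputable section

/-- The theta function with characteristics `θ[p,q](iμ)`. -/
def theta (p q μ : ℂ) : ℂ :=
  ∑' m : ℤ, Complex.exp (-(Real.pi : ℂ) * ((m : ℂ) + p) ^ 2 * μ +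
    2 * (Real.pi : ℂ) * Complex.I * ((m : ℂ) + p) * q)

/-- The characteristic derivative `∂qθ[p,q](iμ)`. -/
def thetaQ (p q μ : ℂ) : ℂ :=
  2 * (Real.pi : ℂ) * Complex.I *
    ∑' m : ℤ, ((m : ℂ) + p) * Complex.exp (-(Real.pi : ℂ) * ((m : ℂ) + p) ^ 2 * μ +
      2 * (Real.pi : ℂ) * Complex.I * ((m : ℂ) + p) * q)

/-- The n-th μ-derivative `∂μⁿθ[p,q](iμ)`, given by its absolutely convergent series. -/
def thetaD (n : ℕ) (p q μ : ℂ) : ℂ :=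
  (-(Real.pi : ℂ)) ^ n *
    ∑' m : ℤ, ((m : ℂ) + p) ^ (2 * n) *
      Complex.exp (-(Real.pi : ℂ) * ((m : ℂ) + p) ^ 2 * μ +
        2 * (Real.pi : ℂ) * Complex.I * ((m : ℂ) + p) * q)

/-- The n-th μ-derivative `∂μⁿ∂qθ[p,q](iμ)`, given by its absolutely convergent series. -/
def thetaQD (n : ℕ) (p q μ : ℂ) : ℂ :=
  2 * Complex.I * (-1 : ℂ) ^ n * (Real.pi : ℂ) ^ (n + 1) *
    ∑' m : ℤ, ((m : ℂ) + p) ^ (2 * n + 1) *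
      Complex.exp (-(Real.pi : ℂ) * ((m : ℂ) + p) ^ 2 * μ +
        2 * (Real.pi : ℂ) * Complex.I * ((m : ℂ) + p) * q)

/-- The constant `C(j|n) = (−i)ⁿ n! / (2ʲ (n−2j)! (2j)!!)` with `(2j)!! = 2ʲ j!`. -/
def Ccoef (j n : ℕ) : ℂ :=
  (-Complex.I) ^ n * (n.factorial : ℂ) /
    ((2 : ℂ) ^ j * ((n - 2 * j).factorial : ℂ) * ((2 : ℂ) ^ j * (j.factorial : ℂ)))

/-- `w₁[p,q](iμ)` of the two-parametric family. -/
def w1 (p q μ : ℂ) : ℂ :=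
  -(Complex.I / 2) * theta 0 0 μ * theta 0 (1 / 2) μ * thetaQ p (q + 1 / 2) μ /
    (Complex.exp ((Real.pi : ℂ) * Complex.I * p) * theta p q μ)

/-- `w₂[p,q](iμ)` of the two-parametric family. -/
def w2 (p q μ : ℂ) : ℂ :=
  (Complex.I / 2) * theta (1 / 2) 0 μ * theta 0 (1 / 2) μ *
    thetaQ (p + 1 / 2) (q + 1 / 2) μ /
    (Complex.exp ((Real.pi : ℂ) * Complex.I * p) * theta p q μ)

/-- `w₃[p,q](iμ)` of the two-parametric family. -/
def w3 (p q μ : ℂ) : ℂ :=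
  -(1 / 2 : ℂ) * theta (1 / 2) 0 μ * theta 0 0 μ * thetaQ (p + 1 / 2) q μ / theta p q μ

/-- The conformal factor `F[p,q](iμ)` of the two-parametric family. -/
def Ftwo (Λ p q μ : ℂ) : ℂ :=
  (2 / ((Real.pi : ℂ) * Λ)) * (theta p q μ / thetaQ p q μ) ^ 2

/-- `w₁[q₀](iμ)` of the one-parametric family. -/
def v1 (q0 μ : ℂ) : ℂ := 1 / (μ + q0) + 2 * thetaD 1 (1 / 2) 0 μ / theta (1 / 2) 0 μ

/-- `w₂[q₀](iμ)` of the one-parametric family. -/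
def v2 (q0 μ : ℂ) : ℂ := 1 / (μ + q0) + 2 * thetaD 1 0 0 μ / theta 0 0 μ

/-- `w₃[q₀](iμ)` of the one-parametric family. -/
def v3 (q0 μ : ℂ) : ℂ := 1 / (μ + q0) + 2 * thetaD 1 0 (1 / 2) μ / theta 0 (1 / 2) μ

/-- The conformal factor `F[q₀](iμ) = C(μ+q₀)²` of the one-parametric family. -/
def Fone (C q0 μ : ℂ) : ℂ := C * (μ + q0) ^ 2

/-- The Seeley–de Witt coefficient `ã₀[p,q](iμ)` of the two-parametric family. -/
def a0two (Λ p q μ : ℂ) : ℂ :=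
  4 * Ftwo Λ p q μ ^ 2 * w1 p q μ * w2 p q μ * w3 p q μ

/-- The Seeley–de Witt coefficient `ã₀[q₀](iμ)` of the one-parametric family. -/
def a0one (C q0 μ : ℂ) : ℂ :=
  4 * Fone C q0 μ ^ 2 * v1 q0 μ * v2 q0 μ * v3 q0 μ

/-- The Seeley–de Witt coefficient `ã₂[p,q](iμ)` of the two-parametric family. -/
def a2two (Λ p q μ : ℂ) : ℂ :=
  -(Ftwo Λ p q μ / 3) * (w1 p q μ ^ 2 + w2 p q μ ^ 2 + w3 p q μ ^ 2) +
  (Ftwo Λ p q μ / 6) *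
    ((w1 p q μ ^ 2 * w2 p q μ ^ 2 - deriv (w3 p q) μ ^ 2) / w3 p q μ ^ 2 +
     (w1 p q μ ^ 2 * w3 p q μ ^ 2 - deriv (w2 p q) μ ^ 2) / w2 p q μ ^ 2 +
     (w2 p q μ ^ 2 * w3 p q μ ^ 2 - deriv (w1 p q) μ ^ 2) / w1 p q μ ^ 2) -
  (Ftwo Λ p q μ / 3) *
    (deriv (w1 p q) μ * deriv (w2 p q) μ / (w1 p q μ * w2 p q μ) +
     deriv (w1 p q) μ * deriv (w3 p q) μ / (w1 p q μ * w3 p q μ) +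
     deriv (w2 p q) μ * deriv (w3 p q) μ / (w2 p q μ * w3 p q μ)) +
  (Ftwo Λ p q μ / 3) *
    (iteratedDeriv 2 (w1 p q) μ / w1 p q μ + iteratedDeriv 2 (w2 p q) μ / w2 p q μ +
     iteratedDeriv 2 (w3 p q) μ / w3 p q μ) -
  deriv (Ftwo Λ p q) μ ^ 2 / (2 * Ftwo Λ p q μ) + iteratedDeriv 2 (Ftwo Λ p q) μ


/-!
Up to a constant factor, `iμ ↦ iμ + 1` carries `θ[p,q]` to `θ[p, q+p+1/2]`, and `iμ ↦ i/μ` carries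
it to `√μ θ[q,-p]`. Hence the first map fixes the logarithmic derivative of `θ₂` and exchanges those
of `θ₃` and `θ₄`, while the second exchanges those of `θ₂` and `θ₄` up to the affine change
`L ↦ -μ/2 - μ²L`, whose inhomogeneous term is the contribution of `√μ`. Once the poles of
`w₁w₂w₃` at `μ = -q₀` are cleared against `F²`, the coefficient `ã₀[q₀]` is
`4C²(μ+q₀) ∏ⱼ (1 + 2(μ+q₀)Lⱼ)`, and under `(q₀, μ) ↦ (1/q₀, 1/μ)` the inhomogeneous term combines
with the `1` in each factor so that the factor is merely multiplied by `-q₀μ`.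
-/

section ThetaTransformations

open Complex Filter

open scoped Real Topology

/-- The `m`-th term of the series `theta p q μ`. The index precedes `μ`, so that the partial
application is a function of `μ`. -/
def thetaTerm (p q : ℂ) (m : ℤ) (μ : ℂ) : ℂ :=
  exp (-(π : ℂ) * ((m : ℂ) + p) ^ 2 * μ + 2 * (π : ℂ) * I * ((m : ℂ) + p) * q)

lemma theta_eq_tsum (p q μ : ℂ) : theta p q μ = ∑' m : ℤ, thetaTerm p q m μ := rfl

lemma thetaTerm_eq_mul_jacobiTheta₂_term (p q : ℂ) (m : ℤ) (μ : ℂ) :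
    thetaTerm p q m μ = thetaTerm p q 0 μ * jacobiTheta₂_term m (q + I * p * μ) (I * μ) := by
  rw [thetaTerm, thetaTerm, jacobiTheta₂_term, ← exp_add]
  congr 1
  push_cast
  linear_combination (-2 * π * m * p * μ - π * m ^ 2 * μ : ℂ) * I_sq

lemma theta_eq_mul_jacobiTheta₂ (p q μ : ℂ) :
    theta p q μ = thetaTerm p q 0 μ * jacobiTheta₂ (q + I * p * μ) (I * μ) := by
  rw [theta_eq_tsum, jacobiTheta₂, ← tsum_mul_left]
  exact tsum_congr fun m => thetaTerm_eq_mul_jacobiTheta₂_term p q m μ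

lemma hasDerivAt_thetaTerm (p q : ℂ) (m : ℤ) (μ : ℂ) :
    HasDerivAt (thetaTerm p q m) (-(π : ℂ) * ((m : ℂ) + p) ^ 2 * thetaTerm p q m μ) μ := by
  have h := (((hasDerivAt_id μ).const_mul (-(π : ℂ) * ((m : ℂ) + p) ^ 2)).add_const
    (2 * (π : ℂ) * I * ((m : ℂ) + p) * q)).cexp
  exact h.congr_deriv (by rw [mul_one, mul_comm]; rfl)

lemma exists_summable_bound_thetaTerm (p q : ℂ) {μ : ℂ} (hμ : 0 < μ.re) :
    ∃ (U : Set ℂ) (u : ℤ → ℝ), IsOpen U ∧ μ ∈ U ∧ Summable u ∧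
      ∀ m, ∀ ν ∈ U, ‖thetaTerm p q m ν‖ ≤ u m := by
  obtain ⟨T, hT, hTμ⟩ := exists_between hμ
  obtain ⟨S, hS⟩ := exists_gt |(q + I * p * μ).im|
  obtain ⟨B, hB⟩ := exists_gt ‖thetaTerm p q 0 μ‖
  have hcont : Continuous (thetaTerm p q 0) :=
    continuous_iff_continuousAt.mpr fun ν => (hasDerivAt_thetaTerm p q 0 ν).continuousAt
  refine ⟨{ν | T < ν.re} ∩ {ν | |(q + I * p * ν).im| < S} ∩ {ν | ‖thetaTerm p q 0 ν‖ < B},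
    fun m => B * Real.exp (-π * (T * m ^ 2 - 2 * S * |m|)), ?_, ⟨⟨hTμ, hS⟩, hB⟩, ?_, ?_⟩
  · exact ((isOpen_lt (by fun_prop) (by fun_prop)).inter
      (isOpen_lt (by fun_prop) (by fun_prop))).inter (isOpen_lt (by fun_prop) (by fun_prop))
  · simpa only [pow_zero, one_mul] using
      (summable_pow_mul_jacobiTheta₂_term_bound S hT 0).mul_left B
  · rintro m ν ⟨⟨hTν, hSν⟩, hBν⟩
    rw [thetaTerm_eq_mul_jacobiTheta₂_term, norm_mul]
    refine mul_le_mul (le_of_lt hBν) (norm_jacobiTheta₂_term_le hT (le_of_lt hSν) ?_ m)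
      (norm_nonneg _) ((norm_nonneg _).trans (le_of_lt hBν))
    simpa only [I_mul_im] using le_of_lt hTν

lemma hasDerivAt_theta (p q : ℂ) {μ : ℂ} (hμ : 0 < μ.re) :
    HasDerivAt (theta p q) (thetaD 1 p q μ) μ := by
  obtain ⟨U, u, hU, hμU, hu, hle⟩ := exists_summable_bound_thetaTerm p q hμ
  have hdiff (m : ℤ) : DifferentiableOn ℂ (thetaTerm p q m) U := fun ν _ =>
    (hasDerivAt_thetaTerm p q m ν).differentiableAt.differentiableWithinAt
  have hderiv : deriv (theta p q) μ = thetaD 1 p q μ := by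
    rw [thetaD, ← tsum_mul_left]
    refine (hasSum_deriv_of_summable_norm hu hdiff hU hle hμU).tsum_eq.symm.trans
      (tsum_congr fun m => ?_)
    rw [(hasDerivAt_thetaTerm p q m μ).deriv, pow_one, mul_one, mul_assoc]
    rfl
  exact hderiv ▸ ((differentiableOn_tsum_of_summable_norm hu hdiff hU hle).differentiableAt
    (hU.mem_nhds hμU)).hasDerivAt

lemma logDeriv_theta (p q : ℂ) {μ : ℂ} (hμ : 0 < μ.re) :
    logDeriv (theta p q) μ = thetaD 1 p q μ / theta p q μ := by
  rw [logDeriv_apply, (hasDerivAt_theta p q hμ).deriv]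

lemma theta_add_one (p q μ : ℂ) : theta p (q + 1) μ = exp (2 * π * I * p) * theta p q μ := by
  rw [theta_eq_tsum, theta_eq_tsum, ← tsum_mul_left]
  refine tsum_congr fun m => ?_
  rw [thetaTerm, thetaTerm, ← exp_add, exp_eq_exp_iff_exists_int]
  exact ⟨m, by ring⟩

lemma theta_sub_I (p q μ : ℂ) :
    theta p q (μ - I) = exp (-(π * I * (p * (p + 1)))) * theta p (q + p + 1 / 2) μ := by
  rw [theta_eq_tsum, theta_eq_tsum, ← tsum_mul_left]
  refine tsum_congr fun m => ?_
  obtain ⟨k, hk⟩ := Int.even_mul_pred_self m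
  have hk' : (m : ℂ) * (m - 1) = k + k := mod_cast hk
  rw [thetaTerm, thetaTerm, ← exp_add, exp_eq_exp_iff_exists_int]
  exact ⟨k, by linear_combination (π * I : ℂ) * hk'⟩

lemma theta_one_div (p q : ℂ) {μ : ℂ} (hμ : μ ≠ 0) :
    theta p q (1 / μ) = exp (2 * π * I * p * q) * μ ^ (1 / 2 : ℂ) * theta q (-p) μ := by
  have hsqrt : μ ^ (1 / 2 : ℂ) ≠ 0 := by simp [cpow_eq_zero_iff, hμ]
  have hbase : -I * (I * μ) = μ := by linear_combination (-μ) * I_sq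
  have hinv : -1 / (I * μ) = I * (1 / μ) := by
    field_simp
    exact I_sq.symm
  have hdiv : (-p + I * q * μ) / (I * μ) = q + I * p * (1 / μ) := by
    field_simp
    linear_combination (-p) * I_sq
  have hexp : thetaTerm p q 0 (1 / μ) = exp (2 * π * I * p * q) *
      (thetaTerm q (-p) 0 μ * exp (-π * I * (-p + I * q * μ) ^ 2 / (I * μ))) := by
    simp only [thetaTerm, ← exp_add]
    congr 1
    field_simp
    push_cast
    linear_combination (q ^ 2 * μ ^ 2) * I_sq
  rw [theta_eq_mul_jacobiTheta₂ p, theta_eq_mul_jacobiTheta₂ q, hexp,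
    jacobiTheta₂_functional_equation (-p + I * q * μ), hbase, hinv, hdiv]
  field_simp

lemma logDeriv_theta_add_one (p q μ : ℂ) :
    logDeriv (theta p (q + 1)) μ = logDeriv (theta p q) μ := by
  rw [funext (theta_add_one p q), logDeriv_const_mul _ _ (exp_ne_zero _)]

lemma logDeriv_theta_sub_I (p q μ : ℂ) :
    logDeriv (theta p q) (μ - I) = logDeriv (theta p (q + p + 1 / 2)) μ := by
  rw [logDeriv_apply, ← deriv_comp_sub_const, ← logDeriv_apply (fun ν => theta p q (ν - I)),
    funext (theta_sub_I p q), logDeriv_const_mul _ _ (exp_ne_zero _)]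

lemma logDeriv_cpow_const (c : ℂ) {x : ℂ} (hx : x ∈ slitPlane) :
    logDeriv (· ^ c) x = c / x := by
  have hx₀ := slitPlane_ne_zero hx
  have hxc : x ^ c ≠ 0 := by simp [cpow_eq_zero_iff, hx₀]
  rw [logDeriv_apply, Complex.deriv_cpow_const hx, cpow_sub _ _ hx₀, cpow_one]
  field_simp

lemma re_one_div_pos {μ : ℂ} (hμ : 0 < μ.re) : 0 < (1 / μ).re := by
  rw [one_div, inv_re]
  exact div_pos hμ (normSq_pos.mpr (ne_zero_of_re_pos hμ))

lemma logDeriv_theta_one_div (p q : ℂ) {μ : ℂ} (hμ : 0 < μ.re) (hθ : theta q (-p) μ ≠ 0) :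
    logDeriv (theta p q) (1 / μ) = -μ / 2 - μ ^ 2 * logDeriv (theta q (-p)) μ := by
  have hμ₀ := ne_zero_of_re_pos hμ
  have hslit : μ ∈ slitPlane := .inl hμ
  have hcomp : logDeriv (fun ν => theta p q (1 / ν)) μ =
      logDeriv (theta p q) (1 / μ) * -(μ ^ 2)⁻¹ := by
    have hinv : HasDerivAt (fun ν : ℂ => 1 / ν) (-(μ ^ 2)⁻¹) μ := by
      simpa only [one_div] using hasDerivAt_inv hμ₀
    rw [← hinv.deriv]
    exact logDeriv_comp (hasDerivAt_theta p q (re_one_div_pos hμ)).differentiableAt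
      hinv.differentiableAt
  have hprod : logDeriv (fun ν => theta p q (1 / ν)) μ =
      1 / 2 / μ + logDeriv (theta q (-p)) μ := by
    have hev : (fun ν => theta p q (1 / ν)) =ᶠ[𝓝 μ]
        fun ν => exp (2 * π * I * p * q) * (ν ^ (1 / 2 : ℂ) * theta q (-p) ν) := by
      filter_upwards [isOpen_ne.mem_nhds hμ₀] with ν hν
      rw [theta_one_div p q hν, mul_assoc]
    rw [(logDeriv_congr_nhds hev).eq_of_nhds, logDeriv_const_mul _ _ (exp_ne_zero _),
      logDeriv_mul _ (by simp [cpow_eq_zero_iff, hμ₀]) hθ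
        (differentiableAt_fun_id.cpow_const hslit) (hasDerivAt_theta q (-p) hμ).differentiableAt,
      logDeriv_cpow_const _ hslit]
  have key := hcomp.symm.trans hprod
  field_simp at key ⊢
  linear_combination -key

lemma a0one_eq_mul_logDeriv (C q0 : ℂ) {μ : ℂ} (hμ : 0 < μ.re) :
    a0one C q0 μ = 4 * C ^ 2 * (μ + q0) *
      ((1 + 2 * (μ + q0) * logDeriv (theta (1 / 2) 0) μ) *
        (1 + 2 * (μ + q0) * logDeriv (theta 0 0) μ) *
        (1 + 2 * (μ + q0) * logDeriv (theta 0 (1 / 2)) μ)) := by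
  rw [logDeriv_theta _ _ hμ, logDeriv_theta _ _ hμ, logDeriv_theta _ _ hμ, a0one, Fone, v1, v2, v3]
  simp only [mul_div_assoc (2 : ℂ)]
  obtain h | h := eq_or_ne (μ + q0) 0
  · simp [h]
  · field_simp

lemma a0one_sub_I (C q0 : ℂ) {μ : ℂ} (hμ : 0 < μ.re) :
    a0one C q0 (μ - I) = a0one C (q0 - I) μ := by
  have hL₂ : logDeriv (theta (1 / 2) 0) (μ - I) = logDeriv (theta (1 / 2) 0) μ := by
    rw [logDeriv_theta_sub_I, ← logDeriv_theta_add_one _ 0]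
    norm_num
  have hL₃ : logDeriv (theta 0 0) (μ - I) = logDeriv (theta 0 (1 / 2)) μ := by
    rw [logDeriv_theta_sub_I]
    norm_num
  have hL₄ : logDeriv (theta 0 (1 / 2)) (μ - I) = logDeriv (theta 0 0) μ := by
    rw [logDeriv_theta_sub_I, ← logDeriv_theta_add_one _ 0]
    norm_num
  rw [a0one_eq_mul_logDeriv C q0 (by simpa using hμ), a0one_eq_mul_logDeriv C (q0 - I) hμ,
    hL₂, hL₃, hL₄]
  ring

lemma a0one_one_div (C : ℂ) {q0 μ : ℂ} (hq0 : q0 ≠ 0) (hμ : 0 < μ.re)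
    (h2 : theta (1 / 2) 0 μ ≠ 0) (h3 : theta 0 0 μ ≠ 0) (h4 : theta 0 (1 / 2) μ ≠ 0) :
    a0one C q0 (1 / μ) = -q0 ^ 4 * μ ^ 2 * a0one C (1 / q0) μ := by
  have hμ₀ := ne_zero_of_re_pos hμ
  have hθ₄ : theta 0 (-2⁻¹) = theta 0 2⁻¹ := by
    ext ν
    have h := theta_add_one 0 (-2⁻¹) ν
    norm_num at h ⊢
    exact h.symm
  have hL₂ : logDeriv (theta (1 / 2) 0) (1 / μ) =
      -μ / 2 - μ ^ 2 * logDeriv (theta 0 (1 / 2)) μ := by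
    simpa [hθ₄] using logDeriv_theta_one_div (1 / 2) 0 hμ (by simpa [hθ₄] using h4)
  have hL₃ : logDeriv (theta 0 0) (1 / μ) = -μ / 2 - μ ^ 2 * logDeriv (theta 0 0) μ := by
    simpa using logDeriv_theta_one_div 0 0 hμ (by simpa using h3)
  have hL₄ : logDeriv (theta 0 (1 / 2)) (1 / μ) =
      -μ / 2 - μ ^ 2 * logDeriv (theta (1 / 2) 0) μ := by
    simpa using logDeriv_theta_one_div 0 (1 / 2) hμ (by simpa using h2)
  have hfactor (L : ℂ) : 1 + 2 * (1 / μ + q0) * (-μ / 2 - μ ^ 2 * L) =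
      -(q0 * μ) * (1 + 2 * (μ + 1 / q0) * L) := by
    field_simp
    ring
  rw [a0one_eq_mul_logDeriv C q0 (re_one_div_pos hμ), a0one_eq_mul_logDeriv C (1 / q0) hμ,
    hL₂, hL₃, hL₄, hfactor, hfactor, hfactor]
  field_simp
  ring

end ThetaTransformations

theorem statement18_general (C : ℂ) {q0 μ : ℂ} (hq0 : q0 ≠ 0) (hμ : 0 < μ.re)
    (h2 : theta (1 / 2) 0 μ ≠ 0) (h3 : theta 0 0 μ ≠ 0) (h4 : theta 0 (1 / 2) μ ≠ 0) :
    a0one C q0 (μ - Complex.I) = a0one C (q0 - Complex.I) μ ∧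
      a0one C q0 (1 / μ) = -q0 ^ 4 * μ ^ 2 * a0one C (1 / q0) μ :=
  ⟨a0one_sub_I C q0 hμ, a0one_one_div C hq0 hμ h2 h3 h4⟩

/-- Modular transformation properties of the Seeley–de Witt coefficient
`ã₀[q₀] = 4F²w₁w₂w₃` of the one-parametric family under `iμ ↦ iμ+1` and `iμ ↦ i/μ`. -/
theorem statement18 (q0 : ℝ) (hq0 : 0 < q0) (C : ℝ) (hC : 0 < C) (μ : ℂ) (hμ : 0 < μ.re)
    (h2 : ∀ ν : ℂ, 0 < ν.re → theta (1 / 2) 0 ν ≠ 0)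
    (h3 : ∀ ν : ℂ, 0 < ν.re → theta 0 0 ν ≠ 0)
    (h4 : ∀ ν : ℂ, 0 < ν.re → theta 0 (1 / 2) ν ≠ 0) :
    a0one (C : ℂ) (q0 : ℂ) (μ - Complex.I) = a0one (C : ℂ) ((q0 : ℂ) - Complex.I) μ ∧
    a0one (C : ℂ) (q0 : ℂ) (1 / μ) = -(q0 : ℂ) ^ 4 * μ ^ 2 * a0one (C : ℂ) (1 / (q0 : ℂ)) μ :=
  statement18_general C (Complex.ofReal_ne_zero.mpr hq0.ne') hμ (h2 μ hμ) (h3 μ hμ) (h4 μ hμ)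

end
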